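/- The one-dimensional dual variant energy constant of the pair (σ̈, ω̈) is finite: Ë* = sup (1/ω̈(I)) Σ_{r≥1} σ̈(I_r)·E(I_r,σ̈)²·(Ṗ(I_r, 1_I ω̈))² < ∞, where the supremum is over all intervals I and all countable decompositions I = ∪̇_{r≥1} I_r into pairwise disjoint intervals, E(I,μ)² = (1/(2μ(I)²)) ∫_I ∫_I ((x−x')²/|I|²) dμ(x') dμ(x), and Ṗ(I,μ) = ∫_ℝ |I|/(|I|+|x−x_I|)^{3−α} dμ(x) with x_I the center of I and |I| its length. -/

import Mathlib

/-!
The supremum is finite because every single term of the sum is bounded by the `ω̈`-mass of its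
own interval: `σ̈(J) E(J, σ̈)² Ṗ(J, 1_I ω̈)² ≤ C ω̈(J)` for all bounded intervals `J`
(`term_le`). Summing over a decomposition `I = ∪ J_r` then gives at most `C ω̈(I)`.

Write `κ = 2 - α` and `s = δ^κ = s₀⁻¹ ≤ 1/3`, so that `2 s < 1` and `4 s² < 1`. Let `z` be an
atom of `σ̈` in `J` of smallest generation `k`.

* The energy does not see the mass at `z`: `σ̈(J) E(J, σ̈)² ≤ σ̈(J \ {z})` (`energy_le`). In
  particular the term vanishes unless `J` contains a second atom.
* On each side of `z`, let `l` be the smallest generation of an atom of `J` on that side. The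
  atoms on that side lie in a single Cantor interval of generation `l` (`ancestor_eq`), so their
  total mass is at most `2 (2 s²)^l`; this is where `4 s² < 1` enters (`sigmaM_le`).
* `J` then contains a Cantor interval of generation `l + 1`, so `ω̈(J) ≥ 2^{-(l+1)}`, and its
  length is at least `b δ^k / 2` (`two_atoms`).
* For such a length, `Ṗ(J, ω̈) ≤ C (2 s)^{-k}` (`stdP_le`). The kernel is at most
  `max(|J|, |x - x_J|)^{-κ}`, and since `2 s < 1` the weak decay of order `κ` is already enough
  to sum over scales (`potential_le`).

As `k ≤ l`, each side contributes at most
`C (2 s²)^l (2 s)^{-2k} ≤ C (2 s²)^l (2 s)^{-2l} = C 2^{-l} ≤ C ω̈(J)` (`side_le`).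
-/


open MeasureTheory Set ENNReal Filter

noncomputable section

/-- The length ratio `δ = (1-b)/2` of the middle-`b` Cantor construction. -/
def del (b : ℝ) : ℝ := (1 - b) / 2

/-- `s₀ = δ^{-(2-α)}`, i.e. `s₀⁻¹ = ((1-b)/2)^{2-α}`. -/
def s0 (α b : ℝ) : ℝ := del b ^ (-(2 - α))

/-- Left endpoint of the generation-`k` interval of the middle-`b` Cantor construction on
`[0,1]` with `0`-based index `m` (the two children of the interval with index `m` at
generation `k` are the intervals with indices `2m` and `2m+1` at generation `k+1`). -/
def cantorLeft (b : ℝ) : ℕ → ℕ → ℝ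
  | 0, _ => 0
  | k + 1, m => cantorLeft b k (m / 2) + (if m % 2 = 1 then (1 + b) / 2 * del b ^ k else 0)

/-- The generation-`k` Cantor interval `I_j^k` (`1`-based index `j`), of length `δ^k`. -/
def cantorI (b : ℝ) (k j : ℕ) : Set ℝ :=
  Icc (cantorLeft b k (j - 1)) (cantorLeft b k (j - 1) + del b ^ k)

/-- The center `z̈_j^k` of the removed open middle gap `G_j^k` of `I_j^k`. -/
def zc (b : ℝ) (k j : ℕ) : ℝ := cantorLeft b k (j - 1) + del b ^ k / 2

/-- The left endpoint `a_j^k` of the removed open middle gap `G_j^k` of `I_j^k`. -/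
def gapLeft (b : ℝ) (k j : ℕ) : ℝ := cantorLeft b k (j - 1) + del b ^ (k + 1)

/-- The middle-`b` Cantor set `E_b = ∩_k ∪_j I_j^k`. -/
def cantorSetMid (b : ℝ) : Set ℝ := ⋂ k : ℕ, ⋃ j : Fin (2 ^ k), cantorI b k (j + 1)

/-- The weights `s_j^k = (2/s₀²)^k`. -/
def sWt (α b : ℝ) (k : ℕ) : ℝ := (2 / s0 α b ^ 2) ^ k

/-- The measure `σ̈ = Σ_{k≥0} Σ_{j=1}^{2^k} s_j^k δ_{z̈_j^k}`. -/
def sigmaM (α b : ℝ) : Measure ℝ :=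
  Measure.sum fun k : ℕ => Measure.sum fun j : Fin (2 ^ k) =>
    ENNReal.ofReal (sWt α b k) • Measure.dirac (zc b k (j + 1))

/-- `ω` is the middle-`b` Cantor measure: the (unique) Borel probability measure supported
in `[0,1]` that assigns mass `2^{-k}` to each generation-`k` Cantor interval. -/
def IsCantorMeasure (b : ℝ) (ω : Measure ℝ) : Prop :=
  IsProbabilityMeasure ω ∧ ω (Icc (0 : ℝ) 1)ᶜ = 0 ∧
    ∀ k j : ℕ, 1 ≤ j → j ≤ 2 ^ k → ω (cantorI b k j) = (2 ^ k : ℝ≥0∞)⁻¹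

/-- The length of a (bounded) interval, viewed as a set. -/
def lenS (S : Set ℝ) : ℝ := sSup S - sInf S

/-- The center of a (bounded) interval, viewed as a set. -/
def ctrS (S : Set ℝ) : ℝ := (sInf S + sSup S) / 2

/-- The standard Poisson integral `Ṗ(I,μ) = ∫ |I|/(|I|+|x-x_I|)^{3-α} dμ(x)`. -/
def stdP (α : ℝ) (S : Set ℝ) (μ : Measure ℝ) : ℝ≥0∞ :=
  ∫⁻ x, ENNReal.ofReal (lenS S / (lenS S + |x - ctrS S|) ^ (3 - α)) ∂μ

/-- The variant (reproducing) Poisson integral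
`𝒫̈(I,μ) = ∫ (|I|/(|I|+|x-x_I|)²)^{2-α} dμ(x)`. -/
def varP (α : ℝ) (S : Set ℝ) (μ : Measure ℝ) : ℝ≥0∞ :=
  ∫⁻ x, ENNReal.ofReal ((lenS S / (lenS S + |x - ctrS S|) ^ 2) ^ (2 - α)) ∂μ

/-- The energy `E(I,μ)² = (1/(2μ(I)²)) ∫_I ∫_I ((x-x')²/|I|²) dμ(x') dμ(x)`. -/
def energyE2 (S : Set ℝ) (μ : Measure ℝ) : ℝ≥0∞ :=
  (2 * μ S ^ 2)⁻¹ * ∫⁻ x in S, ∫⁻ x' in S, ENNReal.ofReal ((x - x') ^ 2 / lenS S ^ 2) ∂μ ∂μ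

/-- The fractional maximal function `M^α μ(x) = sup_{I ∋ x} μ(I)/|I|^{2-α}`. -/
def maxFn (α : ℝ) (μ : Measure ℝ) (x : ℝ) : ℝ≥0∞ :=
  ⨆ (a : ℝ) (c : ℝ) (_ : a < c) (_ : x ∈ Icc a c),
    μ (Icc a c) / ENNReal.ofReal ((c - a) ^ (2 - α))

/-- The point `ż_j^k = a_j^k + c·b·δ^k` inside the gap `G_j^k`. -/
def zdot (b c : ℝ) (k j : ℕ) : ℝ := gapLeft b k j + c * b * del b ^ k

/-- The measure `σ̇ = Σ_{k≥1} Σ_{j=1}^{2^k} s_j^k δ_{ż_j^k}`. -/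
def sigmaDot (α b c : ℝ) : Measure ℝ :=
  Measure.sum fun k : ℕ => Measure.sum fun j : Fin (2 ^ (k + 1)) =>
    ENNReal.ofReal (sWt α b (k + 1)) • Measure.dirac (zdot b c (k + 1) (j + 1))

/-! ### Geometry of the Cantor intervals -/

lemma zc_succ (b : ℝ) (k m : ℕ) : zc b k (m + 1) = cantorLeft b k m + del b ^ k / 2 := by
  simp [zc]

lemma cantorLeft_succ (b : ℝ) (k m : ℕ) :
    cantorLeft b (k + 1) m =
      cantorLeft b k (m / 2) + (if m % 2 = 1 then (1 + b) / 2 * del b ^ k else 0) := rfl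

lemma cantorLeft_child (b : ℝ) (hb1 : 1 / 3 ≤ b) (hb2 : b < 1) (k m : ℕ) :
    cantorLeft b k (m / 2) ≤ cantorLeft b (k + 1) m ∧
      cantorLeft b (k + 1) m + del b ^ (k + 1) ≤ cantorLeft b k (m / 2) + del b ^ k := by
  have hd : 0 < del b := by unfold del; linarith
  have hk : 0 < del b ^ k := pow_pos hd k
  have e : del b ^ (k + 1) = (1 - b) / 2 * del b ^ k := by rw [pow_succ, mul_comm]; rfl
  rw [cantorLeft_succ, e]
  split_ifs
  · constructor <;> nlinarith
  · constructor <;> nlinarith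

/-- Distinct Cantor intervals of generation `k` are at distance at least `b δ^k`. -/
lemma cantorLeft_gap (b : ℝ) (hb1 : 1 / 3 ≤ b) (hb2 : b < 1) (k : ℕ) :
    ∀ p q : ℕ, p < q → q < 2 ^ k →
      cantorLeft b k p + del b ^ k + b * del b ^ k ≤ cantorLeft b k q := by
  have hd : 0 < del b := by unfold del; linarith
  induction k with
  | zero => intro p q h1 h2; simp at h2; omega
  | succ k ih =>
    intro p q h1 h2
    have hk : 0 < del b ^ k := pow_pos hd k
    have e : del b ^ (k + 1) = (1 - b) / 2 * del b ^ k := by rw [pow_succ, mul_comm]; rfl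
    rcases Nat.lt_or_ge (p / 2) (q / 2) with h | h
    · have h3 := ih (p / 2) (q / 2) h (by rw [pow_succ] at h2; omega)
      have h4 := (cantorLeft_child b hb1 hb2 k p).2
      have h5 := (cantorLeft_child b hb1 hb2 k q).1
      have h6 : b * del b ^ (k + 1) ≤ b * del b ^ k := by
        rw [e]
        apply mul_le_mul_of_nonneg_left _ (by linarith)
        nlinarith
      linarith
    · have hpq : p / 2 = q / 2 := by omega
      have hp : ¬ p % 2 = 1 := by omega
      have hq : q % 2 = 1 := by omega
      rw [cantorLeft_succ, cantorLeft_succ, if_neg hp, if_pos hq, hpq, e]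
      have : 0 < b * (1 + b) * del b ^ k := by
        have : 0 < b := by linarith
        positivity
      nlinarith

/-- The center of a gap of generation `k` stays at distance at least `b δ^k / 2` from every
Cantor interval of generation `l ≥ k`, other than the interval it bisects. -/
lemma zc_dichotomy (b : ℝ) (hb1 : 1 / 3 ≤ b) (hb2 : b < 1) (l : ℕ) :
    ∀ k p m : ℕ, k ≤ l → p < 2 ^ k → m < 2 ^ l → (k = l → p ≠ m) →
      zc b k (p + 1) + b * del b ^ k / 2 ≤ cantorLeft b l m ∨
        cantorLeft b l m + del b ^ l ≤ zc b k (p + 1) - b * del b ^ k / 2 := by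
  have hd : 0 < del b := by unfold del; linarith
  have same : ∀ k p m : ℕ, p < 2 ^ k → m < 2 ^ k → p ≠ m →
      zc b k (p + 1) + b * del b ^ k / 2 ≤ cantorLeft b k m ∨
        cantorLeft b k m + del b ^ k ≤ zc b k (p + 1) - b * del b ^ k / 2 := by
    intro k p m hp hm hne
    have hk : 0 < del b ^ k := pow_pos hd k
    rw [zc_succ]
    rcases Nat.lt_or_gt_of_ne hne with h | h
    · left
      have := cantorLeft_gap b hb1 hb2 k p m h hm
      nlinarith
    · right
      have := cantorLeft_gap b hb1 hb2 k m p h hp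
      nlinarith
  induction l with
  | zero =>
    intro k p m hk hp hm hne
    obtain rfl : k = 0 := by omega
    exact same 0 p m hp hm (hne rfl)
  | succ l ih =>
    intro k p m hk hp hm hne
    rcases Nat.lt_or_ge l k with h | h
    · obtain rfl : k = l + 1 := by omega
      exact same _ p m hp hm (hne rfl)
    · have hm2 : m / 2 < 2 ^ l := by rw [pow_succ] at hm; omega
      have hc := cantorLeft_child b hb1 hb2 l m
      by_cases hkl : k = l ∧ p = m / 2
      · obtain ⟨rfl, rfl⟩ := hkl
        have hk : 0 < del b ^ k := pow_pos hd k
        have e : del b ^ (k + 1) = (1 - b) / 2 * del b ^ k := by rw [pow_succ, mul_comm]; rfl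
        rw [zc_succ, cantorLeft_succ, e]
        split_ifs
        · left; nlinarith
        · right; nlinarith
      · rcases ih k p (m / 2) h hp hm2 (fun h1 h2 => hkl ⟨h1, h2⟩) with h1 | h1
        · left; linarith
        · right; linarith

/-- Between two Cantor intervals of generation `l` there is the center of a gap of smaller
generation. -/
lemma exists_zc_between (b : ℝ) (hb1 : 1 / 3 ≤ b) (hb2 : b < 1) (l : ℕ) :
    ∀ p q : ℕ, p < q → q < 2 ^ l → ∃ k i : ℕ, k < l ∧ i < 2 ^ k ∧
      cantorLeft b l p + del b ^ l ≤ zc b k (i + 1) ∧ zc b k (i + 1) ≤ cantorLeft b l q := by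
  have hd : 0 < del b := by unfold del; linarith
  induction l with
  | zero => intro p q h1 h2; simp at h2; omega
  | succ l ih =>
    intro p q h1 h2
    have hq2 : q / 2 < 2 ^ l := by rw [pow_succ] at h2; omega
    rcases Nat.lt_or_ge (p / 2) (q / 2) with h | h
    · obtain ⟨k, i, h3, h4, h5, h6⟩ := ih (p / 2) (q / 2) h hq2
      have h7 := (cantorLeft_child b hb1 hb2 l p).2
      have h8 := (cantorLeft_child b hb1 hb2 l q).1
      exact ⟨k, i, by omega, h4, by linarith, by linarith⟩
    · refine ⟨l, q / 2, by omega, hq2, ?_⟩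
      have hpq : p / 2 = q / 2 := by omega
      have hp : ¬ p % 2 = 1 := by omega
      have hq : q % 2 = 1 := by omega
      have hk : 0 < del b ^ l := pow_pos hd l
      have e : del b ^ (l + 1) = (1 - b) / 2 * del b ^ l := by rw [pow_succ, mul_comm]; rfl
      rw [zc_succ, cantorLeft_succ, cantorLeft_succ, if_neg hp, if_pos hq, hpq, e]
      constructor <;> nlinarith

lemma cantorLeft_ancestor (b : ℝ) (hb1 : 1 / 3 ≤ b) (hb2 : b < 1) (l i : ℕ) :
    ∀ j : ℕ, cantorLeft b l (j / 2 ^ i) ≤ cantorLeft b (l + i) j ∧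
      cantorLeft b (l + i) j + del b ^ (l + i) ≤ cantorLeft b l (j / 2 ^ i) + del b ^ l := by
  induction i with
  | zero => intro j; simp
  | succ i ih =>
    intro j
    have h1 := ih (j / 2)
    have h2 := cantorLeft_child b hb1 hb2 (l + i) j
    rw [Nat.div_div_eq_div_mul, ← pow_succ'] at h1
    rw [← add_assoc]
    constructor <;> linarith [h1.1, h1.2, h2.1, h2.2]

/-- Let `l` be minimal among the generations of the atoms of `σ̈` in the interval `J`. Then all
atoms in `J` lie in one and the same Cantor interval of generation `l`. -/
lemma ancestor_eq (b : ℝ) (hb1 : 1 / 3 ≤ b) (hb2 : b < 1) (J : Set ℝ) (hJ : J.OrdConnected)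
    (l m : ℕ) (hm : m < 2 ^ l) (hz : zc b l (m + 1) ∈ J)
    (hmin : ∀ k i : ℕ, k < l → i < 2 ^ k → zc b k (i + 1) ∉ J)
    (n j : ℕ) (hj : j < 2 ^ (l + n)) (hw : zc b (l + n) (j + 1) ∈ J) : j / 2 ^ n = m := by
  have hd : 0 < del b := by unfold del; linarith
  have hl : 0 < del b ^ l := pow_pos hd l
  have hn : 0 < del b ^ (l + n) := pow_pos hd _
  have hq : j / 2 ^ n < 2 ^ l := by
    rw [Nat.div_lt_iff_lt_mul (by positivity), ← pow_add]; exact hj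
  have ha := cantorLeft_ancestor b hb1 hb2 l n j
  have e1 := zc_succ b l m
  have e2 := zc_succ b (l + n) j
  rcases Nat.lt_trichotomy (j / 2 ^ n) m with h | h | h
  · obtain ⟨k, i, h1, h2, h3, h4⟩ := exists_zc_between b hb1 hb2 l _ _ h hm
    exact absurd (hJ.out hw hz ⟨by linarith [ha.2], by linarith⟩) (hmin k i h1 h2)
  · exact h
  · obtain ⟨k, i, h1, h2, h3, h4⟩ := exists_zc_between b hb1 hb2 l _ _ h hq
    exact absurd (hJ.out hz hw ⟨by linarith, by linarith [ha.1]⟩) (hmin k i h1 h2)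

/-! ### The measure `σ̈` -/

lemma sigmaM_apply (α b : ℝ) {S : Set ℝ} (hS : MeasurableSet S) :
    sigmaM α b S = ∑' k : ℕ, ∑ j : Fin (2 ^ k),
      ENNReal.ofReal (sWt α b k) * S.indicator 1 (zc b k (j + 1)) := by
  unfold sigmaM
  rw [Measure.sum_apply _ hS]
  congr 1; ext k
  rw [Measure.sum_apply _ hS, tsum_fintype]
  congr 1; ext j
  rw [Measure.smul_apply, Measure.dirac_apply' _ hS, smul_eq_mul]

lemma sigmaM_eq_zero (α b : ℝ) {S : Set ℝ} (hS : MeasurableSet S)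
    (h : ∀ k i : ℕ, i < 2 ^ k → zc b k (i + 1) ∉ S) : sigmaM α b S = 0 := by
  rw [sigmaM_apply α b hS, ENNReal.tsum_eq_zero]
  intro k
  apply Finset.sum_eq_zero
  intro j _
  rw [Set.indicator_of_notMem (h k j j.2), mul_zero]

lemma sWt_eq (α b : ℝ) (hb2 : b < 1) (k : ℕ) :
    sWt α b k = (2 * (del b ^ (2 - α)) ^ 2) ^ k := by
  have hd : 0 < del b := by unfold del; linarith
  have : (0 : ℝ) < del b ^ (2 - α) := Real.rpow_pos_of_pos hd _
  unfold sWt s0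
  rw [Real.rpow_neg hd.le]
  congr 1
  field_simp

/-- At generation `l + n` at most `2 ^ n` atoms lie in `J`, if `l` is minimal among the
generations of the atoms of `σ̈` in the interval `J`. -/
lemma generation_sum_le (α b : ℝ) (hb1 : 1 / 3 ≤ b) (hb2 : b < 1)
    (J : Set ℝ) (hJ : J.OrdConnected)
    (l m : ℕ) (hm : m < 2 ^ l) (hz : zc b l (m + 1) ∈ J)
    (hmin : ∀ k i : ℕ, k < l → i < 2 ^ k → zc b k (i + 1) ∉ J) (n : ℕ) :
    ∑ j : Fin (2 ^ (n + l)),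
      ENNReal.ofReal (sWt α b (n + l)) * J.indicator 1 (zc b (n + l) (j + 1)) ≤
        ENNReal.ofReal ((2 * (del b ^ (2 - α)) ^ 2) ^ l * (4 * (del b ^ (2 - α)) ^ 2) ^ n) := by
  have hd : 0 < del b := by unfold del; linarith
  have hs : (0 : ℝ) < del b ^ (2 - α) := Real.rpow_pos_of_pos hd _
  have h1 : ∀ j : Fin (2 ^ (n + l)),
      ENNReal.ofReal (sWt α b (n + l)) * J.indicator 1 (zc b (n + l) (j + 1)) ≤
        if (j : ℕ) ∈ Finset.Ico (m * 2 ^ n) ((m + 1) * 2 ^ n) then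
          ENNReal.ofReal (sWt α b (n + l)) else 0 := by
    intro j
    by_cases hjJ : zc b (n + l) (j + 1) ∈ J
    · have hj2 := j.2
      have hjJ' : zc b (l + n) (j + 1) ∈ J := by rw [add_comm l n]; exact hjJ
      have := ancestor_eq b hb1 hb2 J hJ l m hm hz hmin n j
        (by rw [add_comm l n]; exact hj2) hjJ'
      rw [if_pos]
      · exact mul_le_of_le_one_right' (Set.indicator_le_self' (by simp) _)
      · rw [Finset.mem_Ico]
        have hp : 0 < 2 ^ n := by positivity
        exact ⟨(Nat.le_div_iff_mul_le hp).1 this.ge,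
          (Nat.div_lt_iff_lt_mul hp).1 (by omega)⟩
    · rw [Set.indicator_of_notMem hjJ, mul_zero]; exact zero_le
  refine (Finset.sum_le_sum fun j _ => h1 j).trans ?_
  rw [Fin.sum_univ_eq_sum_range (fun j : ℕ =>
    if j ∈ Finset.Ico (m * 2 ^ n) ((m + 1) * 2 ^ n) then
      ENNReal.ofReal (sWt α b (n + l)) else 0), ← Finset.sum_filter, Finset.sum_const]
  have hcard : (Finset.filter (fun j => j ∈ Finset.Ico (m * 2 ^ n) ((m + 1) * 2 ^ n))
      (Finset.range (2 ^ (n + l)))).card ≤ 2 ^ n := by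
    calc _ ≤ (Finset.Ico (m * 2 ^ n) ((m + 1) * 2 ^ n)).card := by
          apply Finset.card_le_card
          intro x hx
          exact (Finset.mem_filter.1 hx).2
      _ = 2 ^ n := by rw [Nat.card_Ico, add_mul, one_mul, Nat.add_sub_cancel_left]
  rw [nsmul_eq_mul]
  calc _ ≤ ((2 ^ n : ℕ) : ℝ≥0∞) * ENNReal.ofReal (sWt α b (n + l)) := by gcongr
    _ = ENNReal.ofReal ((2 : ℝ) ^ n * sWt α b (n + l)) := by
        rw [ENNReal.ofReal_mul (by positivity), ENNReal.ofReal_pow (by norm_num)]; simp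
    _ = _ := by
        rw [sWt_eq α b hb2]
        generalize del b ^ (2 - α) = s
        congr 1
        rw [show (4 * s ^ 2 : ℝ) = 2 * (2 * s ^ 2) by ring, mul_pow 2 (2 * s ^ 2) n, pow_add]
        ring

lemma tsum_le_of_geometric (f : ℕ → ℝ≥0∞) (s : ℝ) (hs : 0 < s) (hs2 : s ≤ 1 / 3) (l : ℕ)
    (hzero : ∀ k ∈ Finset.range l, f k = 0)
    (hterm : ∀ n, f (n + l) ≤ ENNReal.ofReal ((2 * s ^ 2) ^ l * (4 * s ^ 2) ^ n)) :
    ∑' k, f k ≤ ENNReal.ofReal (2 * (2 * s ^ 2) ^ l) := by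
  rw [← Summable.sum_add_tsum_nat_add' (f := f) (k := l) ENNReal.summable,
    Finset.sum_eq_zero hzero, zero_add]
  refine (ENNReal.tsum_le_tsum hterm).trans ?_
  have h4 : 4 * s ^ 2 ≤ 4 / 9 := by nlinarith
  have hsum : Summable fun n : ℕ => (2 * s ^ 2) ^ l * (4 * s ^ 2) ^ n :=
    (summable_geometric_of_lt_one (by positivity) (by linarith)).mul_left _
  rw [← ENNReal.ofReal_tsum_of_nonneg (fun n => by positivity) hsum, tsum_mul_left,
    tsum_geometric_of_lt_one (by positivity) (by linarith)]
  apply ENNReal.ofReal_le_ofReal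
  rw [mul_comm]
  apply mul_le_mul_of_nonneg_right _ (by positivity)
  rw [inv_le_comm₀ (by linarith) (by norm_num)]
  linarith

/-- If `l` is minimal among the generations of the atoms of `σ̈` in the interval `J`, then
`σ̈(J)` is at most a constant times the mass of a single atom of generation `l`. -/
lemma sigmaM_le (α b : ℝ) (hb1 : 1 / 3 ≤ b) (hb2 : b < 1) (hs2 : del b ^ (2 - α) ≤ 1 / 3)
    (J : Set ℝ) (hJ : J.OrdConnected)
    (l m : ℕ) (hm : m < 2 ^ l) (hz : zc b l (m + 1) ∈ J)
    (hmin : ∀ k i : ℕ, k < l → i < 2 ^ k → zc b k (i + 1) ∉ J) :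
    sigmaM α b J ≤ ENNReal.ofReal (2 * (2 * (del b ^ (2 - α)) ^ 2) ^ l) := by
  have hd : 0 < del b := by unfold del; linarith
  have hs : (0 : ℝ) < del b ^ (2 - α) := Real.rpow_pos_of_pos hd _
  rw [sigmaM_apply α b hJ.measurableSet]
  refine tsum_le_of_geometric _ _ hs hs2 l ?_
    (generation_sum_le α b hb1 hb2 J hJ l m hm hz hmin)
  intro k hk
  apply Finset.sum_eq_zero
  intro j _
  rw [Set.indicator_of_notMem (hmin k j (Finset.mem_range.1 hk) j.2), mul_zero]

/-! ### The Cantor measure -/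

/-- A ball of radius `b δ^k / 2` meets at most one Cantor interval of generation `k`. -/
lemma cantor_ball_le (b : ℝ) (hb1 : 1 / 3 ≤ b) (hb2 : b < 1) (ω : Measure ℝ)
    (hω : IsCantorMeasure b ω) (c : ℝ) (k : ℕ) :
    ω {x | |x - c| < b * del b ^ k / 2} ≤ (2 ^ k : ℝ≥0∞)⁻¹ := by
  obtain ⟨hP, -, hI⟩ := hω
  have hd : 0 < del b := by unfold del; linarith
  have hk : 0 < del b ^ k := pow_pos hd k
  set U : Set ℝ := ⋃ j : Fin (2 ^ k), cantorI b k (j + 1) with hU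
  have hmeas : ∀ j : Fin (2 ^ k), MeasurableSet (cantorI b k (j + 1)) :=
    fun j => measurableSet_Icc
  have hdisj : Pairwise (Function.onFun Disjoint
      fun j : Fin (2 ^ k) => cantorI b k (j + 1)) := by
    have key : ∀ p q : Fin (2 ^ k), p < q →
        Disjoint (cantorI b k (p + 1)) (cantorI b k (q + 1)) := by
      intro p q hpq
      have := cantorLeft_gap b hb1 hb2 k p q hpq q.2
      rw [Set.disjoint_left]
      intro x h1 h2
      simp only [cantorI, Nat.add_sub_cancel, mem_Icc] at h1 h2
      nlinarith
    intro p q hpq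
    rcases lt_or_gt_of_ne hpq with h | h
    · exact key p q h
    · exact (key q p h).symm
  have hU1 : ω U = 1 := by
    rw [hU, measure_iUnion hdisj hmeas, tsum_fintype]
    rw [Finset.sum_congr rfl fun (j : Fin (2 ^ k)) _ => hI k (j + 1) (by omega) j.2]
    simp only [Finset.sum_const, Finset.card_univ, Fintype.card_fin, nsmul_eq_mul]
    push_cast
    exact ENNReal.mul_inv_cancel (by positivity) (by simp)
  have hUc : ω Uᶜ = 0 := by
    rw [prob_compl_eq_zero_iff (MeasurableSet.iUnion hmeas)]; exact hU1
  by_cases hne : ∃ j : Fin (2 ^ k), ∃ x ∈ cantorI b k (j + 1), |x - c| < b * del b ^ k / 2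
  · obtain ⟨j, x, hx, hxc⟩ := hne
    rw [← hI k (j + 1) (by omega) j.2, ← add_zero (ω (cantorI b k (j + 1))), ← hUc]
    refine le_trans (measure_mono ?_) (measure_union_le _ _)
    intro y hy
    simp only [mem_ofPred_eq] at hy
    by_cases hyU : y ∈ U
    · left
      obtain ⟨i, hi⟩ := mem_iUnion.1 hyU
      simp only [cantorI, Nat.add_sub_cancel, mem_Icc] at hx hi
      rw [abs_lt] at hxc hy
      have : i = j := by
        by_contra hij
        rcases lt_or_gt_of_ne hij with h | h
        · have := cantorLeft_gap b hb1 hb2 k i j h j.2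
          linarith [hxc.1, hxc.2, hy.1, hy.2, hx.1, hi.2]
        · have := cantorLeft_gap b hb1 hb2 k j i h i.2
          linarith [hxc.1, hxc.2, hy.1, hy.2, hx.2, hi.1]
      subst this
      simpa [cantorI] using hi
    · right; exact hyU
  · push Not at hne
    have : {x | |x - c| < b * del b ^ k / 2} ⊆ Uᶜ := by
      intro y hy hyU
      obtain ⟨i, hi⟩ := mem_iUnion.1 hyU
      exact absurd hy (not_lt.2 (hne i y hi))
    rw [measure_mono_null this hUc]
    exact zero_le

/-- Potential estimate for `ω̈`, with `κ = 2 - α`, `s = δ^κ` and `2 s < 1`: the geometric sum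
`∑ (2 s)^{-n}` over the scales `δ^n`, `n ≤ k`, is dominated by its last term. -/
lemma potential_le (α b : ℝ) (hα2 : α < 2) (hb1 : 1 / 3 ≤ b) (hb2 : b < 1)
    (hs2 : del b ^ (2 - α) ≤ 1 / 3) (ω : Measure ℝ) (hω : IsCantorMeasure b ω) (c : ℝ) (k : ℕ) :
    ∫⁻ x, ENNReal.ofReal ((max (b * del b ^ k / 2) |x - c|) ^ (-(2 - α))) ∂ω ≤
      ENNReal.ofReal (6 * (b / 2) ^ (-(2 - α)) * ((2 * del b ^ (2 - α)) ^ k)⁻¹) := by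
  have hd : 0 < del b := by unfold del; linarith
  have hs : (0 : ℝ) < del b ^ (2 - α) := Real.rpow_pos_of_pos hd _
  have hb : 0 < b / 2 := by linarith
  have hB : (0 : ℝ) < (b / 2) ^ (-(2 - α)) := Real.rpow_pos_of_pos hb _
  have hP : IsProbabilityMeasure ω := hω.1
  set s := del b ^ (2 - α) with hs_def
  set B := (b / 2) ^ (-(2 - α)) with hB_def
  induction k with
  | zero =>
    calc _ ≤ ∫⁻ x, ENNReal.ofReal (6 * B) ∂ω := by
          apply lintegral_mono
          intro x
          apply ENNReal.ofReal_le_ofReal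
          have : (max (b * del b ^ 0 / 2) |x - c|) ^ (-(2 - α)) ≤ B := by
            apply Real.rpow_le_rpow_of_nonpos hb _ (by linarith)
            simp
          linarith
      _ = _ := by simp
  | succ k ih =>
    set T : Set ℝ := {x | |x - c| < b * del b ^ k / 2} with hT
    have hTm : MeasurableSet T := measurableSet_lt (by fun_prop) measurable_const
    have hk : 0 < del b ^ k := pow_pos hd k
    have hk1 : 0 < del b ^ (k + 1) := pow_pos hd _
    have hscale : (b * del b ^ (k + 1) / 2) ^ (-(2 - α)) = B * (s ^ (k + 1))⁻¹ := by
      rw [show b * del b ^ (k + 1) / 2 = b / 2 * del b ^ (k + 1) by ring,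
        Real.mul_rpow hb.le hk1.le, Real.rpow_neg hk1.le, ← Real.rpow_natCast_mul hd.le,
        mul_comm ((k + 1 : ℕ) : ℝ), Real.rpow_mul_natCast hd.le]
    have hpt : ∀ x, ENNReal.ofReal ((max (b * del b ^ (k + 1) / 2) |x - c|) ^ (-(2 - α))) ≤
        ENNReal.ofReal ((max (b * del b ^ k / 2) |x - c|) ^ (-(2 - α))) +
          T.indicator (fun _ => ENNReal.ofReal (B * (s ^ (k + 1))⁻¹)) x := by
      intro x
      by_cases hx : x ∈ T
      · rw [Set.indicator_of_mem hx, ← hscale]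
        refine le_trans (ENNReal.ofReal_le_ofReal ?_) le_add_self
        exact Real.rpow_le_rpow_of_nonpos (by positivity) (le_max_left _ _) (by linarith)
      · rw [Set.indicator_of_notMem hx, add_zero]
        apply ENNReal.ofReal_le_ofReal
        have hx' : b * del b ^ k / 2 ≤ |x - c| := not_lt.1 hx
        rw [max_eq_right hx']
        have h0 : 0 < b * del b ^ k / 2 := by
          have : 0 < b := by linarith
          positivity
        exact Real.rpow_le_rpow_of_nonpos (by linarith) (le_max_right _ _) (by linarith)
    have hinv : (2 ^ k : ℝ≥0∞)⁻¹ = ENNReal.ofReal ((2 ^ k : ℝ)⁻¹) := by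
      rw [ENNReal.ofReal_inv_of_pos (by positivity), ENNReal.ofReal_pow (by norm_num)]
      simp
    calc _ ≤ ∫⁻ x, (ENNReal.ofReal ((max (b * del b ^ k / 2) |x - c|) ^ (-(2 - α))) +
          T.indicator (fun _ => ENNReal.ofReal (B * (s ^ (k + 1))⁻¹)) x) ∂ω :=
          lintegral_mono hpt
      _ = ∫⁻ x, ENNReal.ofReal ((max (b * del b ^ k / 2) |x - c|) ^ (-(2 - α))) ∂ω +
          ENNReal.ofReal (B * (s ^ (k + 1))⁻¹) * ω T := by
          rw [lintegral_add_right _ (measurable_const.indicator hTm),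
            lintegral_indicator_const hTm]
      _ ≤ ENNReal.ofReal (6 * B * ((2 * s) ^ k)⁻¹) +
          ENNReal.ofReal (B * (s ^ (k + 1))⁻¹) * (2 ^ k : ℝ≥0∞)⁻¹ := by
          gcongr
          exact cantor_ball_le b hb1 hb2 ω hω c k
      _ ≤ _ := by
          rw [hinv, ← ENNReal.ofReal_mul (by positivity),
            ← ENNReal.ofReal_add (by positivity) (by positivity)]
          apply ENNReal.ofReal_le_ofReal
          -- The constant `6` is chosen so that `6 B + B / s ≤ 6 B / (2 s)` when `s ≤ 1 / 3`.
          have e1 : 6 * B * ((2 * s) ^ k)⁻¹ + B * (s ^ (k + 1))⁻¹ * (2 ^ k)⁻¹ =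
              (6 * s + 1) * (B * (s ^ (k + 1))⁻¹ * (2 ^ k)⁻¹) := by
            rw [mul_pow, pow_succ]; field_simp
          have e2 : 6 * B * ((2 * s) ^ (k + 1))⁻¹ =
              3 * (B * (s ^ (k + 1))⁻¹ * (2 ^ k)⁻¹) := by
            rw [mul_pow, pow_succ 2]; field_simp; norm_num
          rw [e1, e2]
          exact mul_le_mul_of_nonneg_right (by linarith) (by positivity)

/-- The interval `J` may be much longer than `δ^k`: only the lower bound on its length is used. -/
lemma stdP_le (α b : ℝ) (hα2 : α < 2) (hb1 : 1 / 3 ≤ b) (hb2 : b < 1)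
    (hs2 : del b ^ (2 - α) ≤ 1 / 3) (ω : Measure ℝ) (hω : IsCantorMeasure b ω)
    (J I : Set ℝ) (k : ℕ) (hL : b * del b ^ k / 2 ≤ lenS J) :
    stdP α J (ω.restrict I) ≤
      ENNReal.ofReal (6 * (b / 2) ^ (-(2 - α)) * ((2 * del b ^ (2 - α)) ^ k)⁻¹) := by
  have hd : 0 < del b := by unfold del; linarith
  have h0 : 0 < b * del b ^ k / 2 := by
    have : 0 < b := by linarith
    positivity
  refine le_trans ?_ (potential_le α b hα2 hb1 hb2 hs2 ω hω (ctrS J) k)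
  refine lintegral_mono' Measure.restrict_le_self fun x => ENNReal.ofReal_le_ofReal ?_
  have hx := abs_nonneg (x - ctrS J)
  have hM : 0 < lenS J + |x - ctrS J| := by linarith
  have h1 : max (b * del b ^ k / 2) |x - ctrS J| ≤ lenS J + |x - ctrS J| :=
    max_le (by linarith) (by linarith)
  calc lenS J / (lenS J + |x - ctrS J|) ^ (3 - α)
      ≤ (lenS J + |x - ctrS J|) / (lenS J + |x - ctrS J|) ^ (3 - α) := by
        gcongr
        linarith
    _ = (lenS J + |x - ctrS J|) ^ (-(2 - α)) := by
        rw [show -(2 - α) = 1 - (3 - α) by ring, Real.rpow_sub hM 1 (3 - α), Real.rpow_one]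
    _ ≤ _ := Real.rpow_le_rpow_of_nonpos (lt_max_of_lt_left h0) h1 (by linarith)

/-! ### Energy of an interval -/

lemma abs_sub_le_lenS {J : Set ℝ} (hJ : Bornology.IsBounded J) {x y : ℝ} (hx : x ∈ J)
    (hy : y ∈ J) : |x - y| ≤ lenS J := by
  have h1 := le_csSup hJ.bddAbove hx
  have h2 := le_csSup hJ.bddAbove hy
  have h3 := csInf_le hJ.bddBelow hx
  have h4 := csInf_le hJ.bddBelow hy
  unfold lenS
  rw [abs_le]
  constructor <;> linarith

/-- `μ(J) E(J, μ)²` does not see the mass of `μ` at a point `z`: the kernel `(x - x')² / |J|²` is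
at most `1` on `J × J` and vanishes at `(z, z)`. -/
lemma energy_le (μ : Measure ℝ) {J : Set ℝ} (hJm : MeasurableSet J)
    (hJ : Bornology.IsBounded J) (z : ℝ) :
    μ J * energyE2 J μ ≤ μ (J \ {z}) := by
  set t := μ (J \ {z}) with ht
  have hint : ∫⁻ x in J, ({z}ᶜ : Set ℝ).indicator 1 x ∂μ = t := by
    rw [lintegral_indicator_one (measurableSet_singleton z).compl,
      Measure.restrict_apply (measurableSet_singleton z).compl, inter_comm]
    rfl
  have hmeas : Measurable (({z}ᶜ : Set ℝ).indicator (1 : ℝ → ℝ≥0∞)) :=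
    measurable_one.indicator (measurableSet_singleton z).compl
  have hpt : ∀ x ∈ J, ∀ x' ∈ J, ENNReal.ofReal ((x - x') ^ 2 / lenS J ^ 2) ≤
      ({z}ᶜ : Set ℝ).indicator 1 x + ({z}ᶜ : Set ℝ).indicator 1 x' := by
    intro x hx x' hx'
    have h1 : ENNReal.ofReal ((x - x') ^ 2 / lenS J ^ 2) ≤ 1 := by
      rw [ENNReal.ofReal_le_one]
      apply div_le_one_of_le₀ _ (sq_nonneg _)
      rw [← sq_abs]
      have := abs_sub_le_lenS hJ hx hx'
      gcongr
    by_cases h : x = z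
    · by_cases h' : x' = z
      · simp [h, h']
      · rw [Set.indicator_of_mem (show x' ∈ ({z}ᶜ : Set ℝ) from h')]
        exact h1.trans le_add_self
    · rw [Set.indicator_of_mem (show x ∈ ({z}ᶜ : Set ℝ) from h)]
      exact h1.trans le_self_add
  have hdouble : ∫⁻ x in J, ∫⁻ x' in J, ENNReal.ofReal ((x - x') ^ 2 / lenS J ^ 2) ∂μ ∂μ ≤
      t * μ J + t * μ J := by
    calc _ ≤ ∫⁻ x in J, (({z}ᶜ : Set ℝ).indicator 1 x * μ J + t) ∂μ := by
          refine setLIntegral_mono' hJm fun x hx => ?_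
          calc _ ≤ ∫⁻ x' in J, (({z}ᶜ : Set ℝ).indicator 1 x +
                ({z}ᶜ : Set ℝ).indicator 1 x') ∂μ :=
                setLIntegral_mono' hJm fun x' hx' => hpt x hx x' hx'
            _ = _ := by
                rw [lintegral_add_left measurable_const, hint, lintegral_const,
                  Measure.restrict_apply_univ]
      _ = _ := by
          rw [lintegral_add_right _ measurable_const, lintegral_mul_const _ hmeas, hint,
            lintegral_const, Measure.restrict_apply_univ]
  calc μ J * energyE2 J μ ≤ μ J * ((2 * μ J ^ 2)⁻¹ * (t * μ J + t * μ J)) := by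
        unfold energyE2; gcongr
    _ = ((2 * μ J ^ 2)⁻¹ * (2 * μ J ^ 2)) * t := by ring
    _ ≤ 1 * t := by gcongr; exact ENNReal.inv_mul_le_one _
    _ = t := one_mul t

/-- Two atoms of `σ̈` of generations `k ≤ l` cut off a whole Cantor interval of generation
`l + 1`, and they are at distance at least `b δ^k / 2`. -/
lemma two_atoms (b : ℝ) (hb1 : 1 / 3 ≤ b) (hb2 : b < 1) (ω : Measure ℝ)
    (hω : IsCantorMeasure b ω) (J : Set ℝ) (hJ : J.OrdConnected)
    (k p l m : ℕ) (hkl : k ≤ l) (hp : p < 2 ^ k) (hm : m < 2 ^ l)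
    (hz : zc b k (p + 1) ∈ J) (hw : zc b l (m + 1) ∈ J)
    (hne : zc b k (p + 1) ≠ zc b l (m + 1)) :
    (2 ^ (l + 1) : ℝ≥0∞)⁻¹ ≤ ω J ∧
      b * del b ^ k / 2 ≤ |zc b k (p + 1) - zc b l (m + 1)| := by
  have hd : 0 < del b := by unfold del; linarith
  have hk : 0 < del b ^ k := pow_pos hd k
  have hl : 0 < del b ^ l := pow_pos hd l
  have hbk : 0 < b * del b ^ k := by
    have : 0 < b := by linarith
    positivity
  have e : del b ^ (l + 1) = (1 - b) / 2 * del b ^ l := by rw [pow_succ, mul_comm]; rfl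
  have e2 := zc_succ b l m
  have hchild : ∀ i, i < 2 ^ (l + 1) → cantorI b (l + 1) (i + 1) ⊆ J →
      (2 ^ (l + 1) : ℝ≥0∞)⁻¹ ≤ ω J := by
    intro i hi hsub
    rw [← hω.2.2 (l + 1) (i + 1) (by omega) hi]
    exact measure_mono hsub
  rcases zc_dichotomy b hb1 hb2 l k p m hkl hp hm
    (by rintro rfl rfl; exact hne rfl) with h | h
  · constructor
    · apply hchild (2 * m) (by rw [pow_succ]; omega)
      intro x hx
      simp only [cantorI, Nat.add_sub_cancel, mem_Icc, cantorLeft_succ] at hx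
      rw [show 2 * m / 2 = m by omega, if_neg (by omega), e] at hx
      exact hJ.out hz hw ⟨by linarith, by nlinarith⟩
    · rw [abs_sub_comm]
      exact le_trans (by linarith) (le_abs_self _)
  · constructor
    · apply hchild (2 * m + 1) (by rw [pow_succ]; omega)
      intro x hx
      simp only [cantorI, Nat.add_sub_cancel, mem_Icc, cantorLeft_succ] at hx
      rw [show (2 * m + 1) / 2 = m by omega, if_pos (by omega), e] at hx
      exact hJ.out hw hz ⟨by nlinarith, by nlinarith⟩
    · exact le_trans (by linarith) (le_abs_self _)

/-- One-sided estimate: `J'` is a subinterval of `J` missing an atom `z` of smallest generation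
`k` in `J`; it is used for the two parts of `J` on either side of `z`. -/
lemma side_le (α b : ℝ) (hα2 : α < 2) (hb1 : 1 / 3 ≤ b) (hb2 : b < 1)
    (hs2 : del b ^ (2 - α) ≤ 1 / 3) (ω : Measure ℝ) (hω : IsCantorMeasure b ω)
    (I J J' : Set ℝ) (hJ : J.OrdConnected) (hJb : Bornology.IsBounded J)
    (hJ' : J'.OrdConnected) (hsub : J' ⊆ J)
    (k p : ℕ) (hp : p < 2 ^ k) (hz : zc b k (p + 1) ∈ J) (hz' : zc b k (p + 1) ∉ J')
    (hmin : ∀ n i : ℕ, n < k → i < 2 ^ n → zc b n (i + 1) ∉ J) :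
    sigmaM α b J' * stdP α J (ω.restrict I) ^ 2 ≤
      ENNReal.ofReal (144 * ((b / 2) ^ (-(2 - α))) ^ 2) * ω J := by
  classical
  by_cases hex : ∃ l, ∃ m, m < 2 ^ l ∧ zc b l (m + 1) ∈ J'
  · obtain ⟨m, hm, hw⟩ := Nat.find_spec hex
    have hmin' : ∀ n i : ℕ, n < Nat.find hex → i < 2 ^ n → zc b n (i + 1) ∉ J' :=
      fun n i hn hi hmem => Nat.find_min hex hn ⟨i, hi, hmem⟩
    generalize Nat.find hex = l at hm hw hmin'
    have hkl : k ≤ l := by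
      by_contra h
      exact hmin l m (by omega) hm (hsub hw)
    obtain ⟨h1, h2⟩ := two_atoms b hb1 hb2 ω hω J hJ k p l m hkl hp hm hz (hsub hw)
      (fun h => hz' (h ▸ hw))
    have h3 := stdP_le α b hα2 hb1 hb2 hs2 ω hω J I k
      (h2.trans (abs_sub_le_lenS hJb hz (hsub hw)))
    have h4 := sigmaM_le α b hb1 hb2 hs2 J' hJ' l m hm hw hmin'
    have hd : 0 < del b := by unfold del; linarith
    have hs : (0 : ℝ) < del b ^ (2 - α) := Real.rpow_pos_of_pos hd _
    have hB : (0 : ℝ) < (b / 2) ^ (-(2 - α)) := Real.rpow_pos_of_pos (by linarith) _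
    set s := del b ^ (2 - α)
    set B := (b / 2) ^ (-(2 - α))
    have hinv : (2 ^ (l + 1) : ℝ≥0∞)⁻¹ = ENNReal.ofReal ((2 ^ (l + 1) : ℝ)⁻¹) := by
      rw [ENNReal.ofReal_inv_of_pos (by positivity), ENNReal.ofReal_pow (by norm_num)]
      simp
    refine le_trans ?_ (mul_le_mul_right h1 _)
    calc _ ≤ ENNReal.ofReal (2 * (2 * s ^ 2) ^ l) *
          ENNReal.ofReal (6 * B * ((2 * s) ^ k)⁻¹) ^ 2 := by gcongr
      _ ≤ _ := by
        rw [hinv, ← ENNReal.ofReal_pow (by positivity), ← ENNReal.ofReal_mul (by positivity),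
          ← ENNReal.ofReal_mul (by positivity)]
        apply ENNReal.ofReal_le_ofReal
        -- As `2 s < 1` and `k ≤ l`, the factor `(2 s)^{-k}` may be replaced by `(2 s)^{-l}`.
        have h5 : ((2 * s) ^ k)⁻¹ ≤ ((2 * s) ^ l)⁻¹ := by
          apply inv_anti₀ (by positivity)
          exact pow_le_pow_of_le_one (by positivity) (by linarith) hkl
        calc 2 * (2 * s ^ 2) ^ l * (6 * B * ((2 * s) ^ k)⁻¹) ^ 2
            ≤ 2 * (2 * s ^ 2) ^ l * (6 * B * ((2 * s) ^ l)⁻¹) ^ 2 := by gcongr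
          _ = 144 * B ^ 2 * (2 ^ (l + 1))⁻¹ := by
            rw [mul_pow 2 (s ^ 2), mul_pow 2 s, pow_succ 2 l, ← pow_mul, mul_comm 2 l, pow_mul]
            field_simp
            norm_num
  · push Not at hex
    rw [sigmaM_eq_zero α b hJ'.measurableSet hex, zero_mul]
    exact zero_le

/-- Each term of the energy sum is dominated by the `ω̈`-mass of its own interval. -/
lemma term_le (α b : ℝ) (hα2 : α < 2) (hb1 : 1 / 3 ≤ b) (hb2 : b < 1)
    (hs2 : del b ^ (2 - α) ≤ 1 / 3) (ω : Measure ℝ) (hω : IsCantorMeasure b ω)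
    (I J : Set ℝ) (hJ : J.OrdConnected) (hJb : Bornology.IsBounded J) :
    sigmaM α b J * energyE2 J (sigmaM α b) * stdP α J (ω.restrict I) ^ 2 ≤
      2 * ENNReal.ofReal (144 * ((b / 2) ^ (-(2 - α))) ^ 2) * ω J := by
  classical
  by_cases hex : ∃ k, ∃ p, p < 2 ^ k ∧ zc b k (p + 1) ∈ J
  · obtain ⟨p, hp, hz⟩ := Nat.find_spec hex
    have hmin : ∀ n i : ℕ, n < Nat.find hex → i < 2 ^ n → zc b n (i + 1) ∉ J :=
      fun n i hn hi hmem => Nat.find_min hex hn ⟨i, hi, hmem⟩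
    generalize Nat.find hex = k at hp hz hmin
    set z := zc b k (p + 1) with hz_def
    have hcover : J \ {z} ⊆ (J ∩ Iio z) ∪ (J ∩ Ioi z) := by
      rintro x ⟨hx, hxz⟩
      rcases lt_or_gt_of_ne hxz with h | h
      · exact Or.inl ⟨hx, h⟩
      · exact Or.inr ⟨hx, h⟩
    have hl := side_le α b hα2 hb1 hb2 hs2 ω hω I J (J ∩ Iio z) hJ hJb
      (hJ.inter ordConnected_Iio) inter_subset_left k p hp hz
      (fun h => lt_irrefl z h.2) hmin
    have hr := side_le α b hα2 hb1 hb2 hs2 ω hω I J (J ∩ Ioi z) hJ hJb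
      (hJ.inter ordConnected_Ioi) inter_subset_left k p hp hz
      (fun h => lt_irrefl z h.2) hmin
    calc _ ≤ (sigmaM α b (J ∩ Iio z) + sigmaM α b (J ∩ Ioi z)) *
          stdP α J (ω.restrict I) ^ 2 := by
          gcongr
          exact (energy_le _ hJ.measurableSet hJb z).trans
            ((measure_mono hcover).trans (measure_union_le _ _))
      _ ≤ _ := by
          rw [add_mul, mul_assoc, two_mul]
          exact add_le_add hl hr
  · push Not at hex
    rw [sigmaM_eq_zero α b hJ.measurableSet hex, zero_mul, zero_mul]
    exact zero_le

/-! ### Finiteness of the energy constant -/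

/-- The one-dimensional dual variant energy constant `Ë*` of the pair `(σ̈, ω̈)` is finite:
the supremum over all (bounded) intervals `I` and countable decompositions `I = ∪̇_r I_r`
into pairwise disjoint intervals of
`ω̈(I)⁻¹ Σ_r σ̈(I_r)·E(I_r,σ̈)²·Ṗ(I_r, 1_I ω̈)²` is finite. -/
theorem dual_variant_energy_finite (α b : ℝ) (hα0 : 0 ≤ α) (hα2 : α < 2) (hb1 : 1 / 3 ≤ b) (hb2 : b < 1)
    (hs1 : 1 / 9 ≤ del b ^ (2 - α)) (hs2 : del b ^ (2 - α) ≤ 1 / 3)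
    (ω : Measure ℝ) (hω : IsCantorMeasure b ω) :
    (⨆ (I : Set ℝ) (_ : I.OrdConnected) (_ : Bornology.IsBounded I) (J : ℕ → Set ℝ)
        (_ : ∀ r, (J r).OrdConnected) (_ : Pairwise (Function.onFun Disjoint J))
        (_ : I = ⋃ r, J r),
        (ω I)⁻¹ *
          ∑' r : ℕ,
            sigmaM α b (J r) * energyE2 (J r) (sigmaM α b) *
              stdP α (J r) (ω.restrict I) ^ 2) ≠ ⊤ := by
  set C : ℝ≥0∞ := 2 * ENNReal.ofReal (144 * ((b / 2) ^ (-(2 - α))) ^ 2) with hC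
  have hCtop : C ≠ ⊤ := ENNReal.mul_ne_top (by simp) ENNReal.ofReal_ne_top
  refine ne_top_of_le_ne_top hCtop ?_
  refine iSup_le fun I => iSup_le fun hI => iSup_le fun hIb => iSup_le fun J =>
    iSup_le fun hJ => iSup_le fun hJd => iSup_le fun hIJ => ?_
  have hsum : ∑' r : ℕ, sigmaM α b (J r) * energyE2 (J r) (sigmaM α b) *
      stdP α (J r) (ω.restrict I) ^ 2 ≤ C * ω I := by
    calc _ ≤ ∑' r : ℕ, C * ω (J r) := by
          refine ENNReal.tsum_le_tsum fun r => ?_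
          exact term_le α b hα2 hb1 hb2 hs2 ω hω I (J r) (hJ r)
            (hIb.subset (hIJ ▸ subset_iUnion J r))
      _ = C * ω I := by
          rw [ENNReal.tsum_mul_left, hIJ, measure_iUnion hJd fun r => (hJ r).measurableSet]
  calc _ ≤ (ω I)⁻¹ * (C * ω I) := by gcongr
    _ = C * ((ω I)⁻¹ * ω I) := by ring
    _ ≤ C * 1 := by gcongr; exact ENNReal.inv_mul_le_one _
    _ = C := mul_one C
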